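/- Let d ≥ 1 be an integer and fix 1 ≤ p ≤ ∞ with p ≠ 2. A nonempty subset Λ of ℤ^d is a contractive projection set for L^p(𝕋^d) if and only if Λ is a coset in ℤ^d. -/

import Mathlib

open MeasureTheory
open scoped Classical ENNReal

noncomputable section

/-- The `d`-dimensional torus, modelled as `d` copies of `ℝ/ℤ`,
whose product `volume` measure is the normalized Haar measure. -/
abbrev Torus (d : ℕ) := Fin d → AddCircle (1 : ℝ)

/-- The character `z ↦ z^α` on the torus. -/
def torusChar {d : ℕ} (α : Fin d → ℤ) (x : Torus d) : ℂ :=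
  ∏ j, fourier (α j) (x j)

/-- The trigonometric polynomial with frequencies in `F` and coefficients `a`. -/
def trigPoly {d : ℕ} (F : Finset (Fin d → ℤ)) (a : (Fin d → ℤ) → ℂ) (x : Torus d) : ℂ :=
  ∑ α ∈ F, a α * torusChar α x

/-- The set `ℕ₀^d` of multi-indices with nonnegative entries. -/
def NN (d : ℕ) : Set (Fin d → ℤ) := {α | ∀ j, 0 ≤ α j}

/-- `Λ` is a coset in `ℤ^d`, i.e. a translate of a subgroup. -/
def IsCoset {d : ℕ} (Λ : Set (Fin d → ℤ)) : Prop :=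
  ∃ (x : Fin d → ℤ) (H : AddSubgroup (Fin d → ℤ)),
    Λ = (x + ·) '' (H : Set (Fin d → ℤ))

/-- `Λ` is a contractive projection set for `L^p(𝕋^d)`:
the projection onto frequencies in `Λ` is contractive on trigonometric polynomials. -/
def IsContractiveLp (d : ℕ) (p : ℝ≥0∞) (Λ : Set (Fin d → ℤ)) : Prop :=
  ∀ (F : Finset (Fin d → ℤ)) (a : (Fin d → ℤ) → ℂ),
    eLpNorm (trigPoly (F.filter (· ∈ Λ)) a) p volume ≤ eLpNorm (trigPoly F a) p volume

/-- `Γ` is a contractive projection set for `H^p(𝕋^d)`: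
the projection onto frequencies in `Γ` is contractive on analytic polynomials. -/
def IsContractiveHp (d : ℕ) (p : ℝ≥0∞) (Γ : Set (Fin d → ℤ)) : Prop :=
  ∀ F : Finset (Fin d → ℤ), ↑F ⊆ NN d → ∀ a : (Fin d → ℤ) → ℂ,
    eLpNorm (trigPoly (F.filter (· ∈ Γ)) a) p volume ≤ eLpNorm (trigPoly F a) p volume

/-- `Γ` has dimension `k`: the subgroup generated by the differences `γ - γ₀` has rank `k`. -/
def HasDim {d : ℕ} (Γ : Set (Fin d → ℤ)) (k : ℕ) : Prop :=
  ∀ γ₀ ∈ Γ, Module.finrank ℤ (Submodule.span ℤ ((· - γ₀) '' Γ)) = k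

/-- `H^p(𝕋^d)` enjoys the contractive restriction property of dimension `k`:
every `k`-dimensional contractive projection set for `H^p(𝕋^d)` is the restriction
of a coset in `ℤ^d` to `ℕ₀^d`. -/
def ContractiveRestrictionProperty (d : ℕ) (p : ℝ≥0∞) (k : ℕ) : Prop :=
  ∀ Γ : Set (Fin d → ℤ), Γ.Nonempty → Γ ⊆ NN d → HasDim Γ k → IsContractiveHp d p Γ →
    ∃ Λ : Set (Fin d → ℤ), IsCoset Λ ∧ Γ = Λ ∩ NN d

/-- The coset `Λ(Γ)` in `ℤ^d` generated by `Γ`. -/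
def cosetGen {d : ℕ} (Γ : Set (Fin d → ℤ)) : Set (Fin d → ℤ) :=
  ⋃ γ₀ ∈ Γ, (γ₀ + ·) '' (AddSubgroup.closure ((· - γ₀) '' Γ) : Set (Fin d → ℤ))

/-- The `n`-extension `E_n(Γ)`: all points of `Λ(Γ) ∩ ℕ₀^d` at distance at most `n` from `Γ`. -/
def Eext {d : ℕ} (n : ℕ) (Γ : Set (Fin d → ℤ)) : Set (Fin d → ℤ) :=
  {lam | lam ∈ cosetGen Γ ∩ NN d ∧ ∃ γ ∈ Γ, ∃ m : (Fin d → ℤ) →₀ ℤ,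
    (↑m.support : Set (Fin d → ℤ)) ⊆ Γ \ {γ} ∧
    lam = γ + ∑ α ∈ m.support, m α • (α - γ) ∧
    (∑ α ∈ m.support, max (m α) 0) ≤ (n : ℤ) ∧
    (∑ α ∈ m.support, max (-(m α)) 0) ≤ (n : ℤ)}

/-- Iterated `n`-extensions `E_n^k(Γ)`. -/
def EextIter {d : ℕ} (n : ℕ) : ℕ → Set (Fin d → ℤ) → Set (Fin d → ℤ)
  | 0, Γ => Eext n Γ
  | (k + 1), Γ => Eext n (EextIter n k Γ)

/-- The `n`-completion `E_n^∞(Γ)`. -/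
def EextInf {d : ℕ} (n : ℕ) (Γ : Set (Fin d → ℤ)) : Set (Fin d → ℤ) :=
  ⋃ k, EextIter n k Γ

lemma tc_add_left {d : ℕ} (α β : Fin d → ℤ) (x : Torus d) :
    torusChar (α + β) x = torusChar α x * torusChar β x := by
  simp [torusChar, Finset.prod_mul_distrib, -fourier_apply, fourier_add]

lemma tc_eq {d : ℕ} (α : Fin d → ℤ) (x : Torus d) :
    torusChar α x = ((∑ j, α j • x j).toCircle : ℂ) := by
  unfold torusChar
  have : ∀ s : Finset (Fin d), ∏ j ∈ s, (fourier (α j) (x j) : ℂ)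
      = ((∑ j ∈ s, α j • x j).toCircle : ℂ) := by
    intro s
    induction s using Finset.induction_on with
    | empty => simp
    | insert a s ha ih =>
      rw [Finset.prod_insert ha, Finset.sum_insert ha, AddCircle.toCircle_add, ih, fourier_apply]
      simp
  exact this _

lemma tc_add_right {d : ℕ} (α : Fin d → ℤ) (x y : Torus d) :
    torusChar α (x + y) = torusChar α x * torusChar α y := by
  simp [tc_eq, Finset.sum_add_distrib, AddCircle.toCircle_add]

lemma tc_norm {d : ℕ} (α : Fin d → ℤ) (x : Torus d) : ‖torusChar α x‖ = 1 := by
  rw [tc_eq]; exact Circle.norm_coe _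

lemma tc_cont {d : ℕ} (α : Fin d → ℤ) : Continuous (torusChar α : Torus d → ℂ) := by
  unfold torusChar
  exact continuous_finsetProd _ fun j _ => (fourier (α j)).continuous.comp (continuous_apply j)

lemma tc_zero_left {d : ℕ} (x : Torus d) : torusChar 0 x = 1 := by
  simp [tc_eq]

lemma tc_zero_right {d : ℕ} (α : Fin d → ℤ) : torusChar α (0 : Torus d) = 1 := by
  simp [tc_eq]

lemma tc_nsmul {d : ℕ} (α : Fin d → ℤ) (n : ℕ) (x : Torus d) :
    torusChar α (n • x) = torusChar α x ^ n := by
  induction n with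
  | zero => simp [tc_zero_right]
  | succ n ih => rw [succ_nsmul, tc_add_right, ih, pow_succ]

lemma tc_sub_left {d : ℕ} (α β : Fin d → ℤ) (x : Torus d) :
    torusChar (α - β) x = torusChar α x * torusChar (-β) x := by
  rw [sub_eq_add_neg, tc_add_left]

lemma tp_cont {d : ℕ} (F : Finset (Fin d → ℤ)) (a : (Fin d → ℤ) → ℂ) :
    Continuous (trigPoly F a) := by
  unfold trigPoly
  exact continuous_finsetSum _ fun j _ => continuous_const.mul (tc_cont j)

lemma tc_eq_one_iff {d : ℕ} (α : Fin d → ℤ) (x : Torus d) :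
    torusChar α x = 1 ↔ ∑ j, α j • x j = 0 := by
  rw [tc_eq]
  constructor
  · intro h
    apply AddCircle.injective_toCircle (T := (1:ℝ)) one_ne_zero
    ext
    simpa using h
  · intro h; simp [h]

/-- the map `ℚ/ℤ → ℝ/ℤ` -/
def qToR : AddCircle (1:ℚ) →+ AddCircle (1:ℝ) :=
  QuotientAddGroup.map _ _ (Rat.castHom ℝ).toAddMonoidHom (by
    intro x hx
    obtain ⟨n, rfl⟩ := AddSubgroup.mem_zmultiples_iff.1 hx
    refine AddSubgroup.mem_zmultiples_iff.2 ⟨n, by simp⟩)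

lemma qToR_coe (r : ℚ) : qToR (r : AddCircle (1:ℚ)) = ((r:ℝ) : AddCircle (1:ℝ)) := rfl

lemma qToR_eq_zero {y : AddCircle (1:ℚ)} (h : qToR y = 0) : y = 0 := by
  induction y using QuotientAddGroup.induction_on with
  | H r =>
    rw [qToR_coe, AddCircle.coe_eq_zero_iff] at h
    obtain ⟨n, hn⟩ := h
    refine (AddCircle.coe_eq_zero_iff _).2 ⟨n, ?_⟩
    have : ((n:ℚ):ℝ) = (r:ℝ) := by simpa using hn
    simpa using (by exact_mod_cast this : (n:ℚ) = r)

lemma q_torsion (y : AddCircle (1:ℚ)) : ∃ n : ℕ, 0 < n ∧ n • y = 0 := by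
  induction y using QuotientAddGroup.induction_on with
  | H r =>
    refine ⟨r.den, r.den_pos, ?_⟩
    change r.den • (r : AddCircle (1:ℚ)) = 0
    rw [← AddCircle.coe_nsmul, AddCircle.coe_eq_zero_iff]
    exact ⟨r.num, by simp [Rat.den_mul_eq_num]⟩

lemma exists_sep {d : ℕ} (H : AddSubgroup (Fin d → ℤ)) (v : Fin d → ℤ) (hv : v ∉ H) :
    ∃ (t : Torus d) (N : ℕ), 0 < N ∧ N • t = 0 ∧ (∀ h ∈ H, torusChar h t = 1) ∧
      torusChar v t ≠ 1 := by
  have hne : (QuotientAddGroup.mk v : (Fin d → ℤ) ⧸ H) ≠ 0 := by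
    rwa [Ne, QuotientAddGroup.eq_zero_iff]
  obtain ⟨c, hc⟩ := CharacterModule.exists_character_apply_ne_zero_of_ne_zero hne
  let φ : (Fin d → ℤ) →+ AddCircle (1:ℚ) := (c : _ →+ AddCircle (1:ℚ)).comp (QuotientAddGroup.mk' H)
  have hφv : φ v ≠ 0 := hc
  have hφH : ∀ h ∈ H, φ h = 0 := by
    intro h hh
    change c (QuotientAddGroup.mk h) = 0
    rw [(QuotientAddGroup.eq_zero_iff h).2 hh]; exact map_zero c
  let t : Torus d := fun j => qToR (φ (Pi.single j 1))
  have key : ∀ w : Fin d → ℤ, ∑ j, w j • t j = qToR (φ w) := by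
    intro w
    have hw : w = ∑ j, w j • (Pi.single j (1:ℤ) : Fin d → ℤ) := by
      ext i; simp [Finset.sum_apply, Pi.single_apply]
    conv_rhs => rw [hw]
    simp only [t, map_sum, map_zsmul]
  choose n hn hn0 using fun j => q_torsion (φ (Pi.single j 1))
  refine ⟨t, ∏ j, n j, Finset.prod_pos fun j _ => hn j, ?_, ?_, ?_⟩
  · funext j
    obtain ⟨k, hk⟩ := Finset.dvd_prod_of_mem n (Finset.mem_univ j)
    simp only [Pi.smul_apply, t, Pi.zero_apply]
    rw [hk, ← map_nsmul, mul_comm, mul_smul, hn0]; simp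
  · intro h hh
    rw [tc_eq_one_iff, key, hφH h hh, map_zero]
  · rw [Ne, tc_eq_one_iff, key]
    exact fun h => hφv (qToR_eq_zero h)

lemma step_avg {d : ℕ} (p : ℝ≥0∞) (hp1 : 1 ≤ p) (F : Finset (Fin d → ℤ))
    (a : (Fin d → ℤ) → ℂ) (x : Fin d → ℤ) (t : Torus d) (N : ℕ) (hN : 0 < N) (ht : N • t = 0) :
    eLpNorm (trigPoly (F.filter (fun α => torusChar (α - x) t = 1)) a) p volume
      ≤ eLpNorm (trigPoly F a) p volume := by
  have hNC : (N:ℂ) ≠ 0 := by exact_mod_cast hN.ne'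
  let g : ℕ → Torus d → ℂ := fun n y => torusChar (-x) (n • t) * trigPoly F a (y + n • t)
  have hgc : ∀ n, Continuous (g n) := fun n =>
    continuous_const.mul ((tp_cont F a).comp (continuous_add_const _))
  have hg : ∀ n, eLpNorm (g n) p volume = eLpNorm (trigPoly F a) p volume := by
    intro n
    have h1 : eLpNorm (g n) p volume = eLpNorm (trigPoly F a ∘ (· + n • t)) p volume := by
      apply eLpNorm_congr_norm_ae
      filter_upwards with y
      simp [g, tc_norm]
    rw [h1]
    exact eLpNorm_comp_measurePreserving (tp_cont F a).aestronglyMeasurable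
      (measurePreserving_add_right volume (n • t))
  have heq : (N:ℂ) • trigPoly (F.filter (fun α => torusChar (α - x) t = 1)) a
      = ∑ n ∈ Finset.range N, g n := by
    funext y
    simp only [Pi.smul_apply, Finset.sum_apply, g, trigPoly, smul_eq_mul]
    simp_rw [Finset.mul_sum]
    rw [Finset.sum_comm, Finset.sum_filter]
    refine Finset.sum_congr rfl fun α _ => ?_
    have : ∀ n ∈ Finset.range N, torusChar (-x) (n • t) * (a α * torusChar α (y + n • t))
        = a α * torusChar α y * torusChar (α - x) t ^ n := by
      intro n _
      rw [tc_add_right, tc_sub_left, tc_nsmul, tc_nsmul, mul_pow]; ring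
    rw [Finset.sum_congr rfl this, ← Finset.mul_sum]
    split_ifs with h
    · simp [h]; ring
    · have hz : torusChar (α - x) t ^ N = 1 := by
        rw [← tc_nsmul, ht, tc_zero_right]
      rw [geom_sum_eq h, hz]; simp
  have h2 : eLpNorm (∑ n ∈ Finset.range N, g n) p volume
      ≤ ∑ n ∈ Finset.range N, eLpNorm (g n) p volume :=
    eLpNorm_sum_le (fun n _ => (hgc n).aestronglyMeasurable) hp1
  rw [← heq, eLpNorm_const_smul, Finset.sum_congr rfl (fun n _ => hg n)] at h2
  simp only [Finset.sum_const, Finset.card_range, nsmul_eq_mul] at h2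
  have h3 : ‖(N:ℂ)‖ₑ = (N:ℝ≥0∞) := by
    rw [← ofReal_norm]; simp
  rw [h3] at h2
  exact (ENNReal.mul_le_mul_iff_right (by exact_mod_cast hN.ne') (ENNReal.natCast_ne_top N)).1 h2

lemma contractive_of_coset {d : ℕ} (p : ℝ≥0∞) (hp1 : 1 ≤ p) (x : Fin d → ℤ)
    (H : AddSubgroup (Fin d → ℤ)) :
    IsContractiveLp d p ((x + ·) '' (H : Set (Fin d → ℤ))) := by
  have hmem : ∀ α, α ∈ ((x + ·) '' (H : Set (Fin d → ℤ))) ↔ α - x ∈ H := by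
    intro α
    constructor
    · rintro ⟨h, hh, rfl⟩; simpa using hh
    · intro h; exact ⟨α - x, h, by simp⟩
  intro F a
  induction F using Finset.strongInduction with
  | H F ih =>
    by_cases hF : ∀ α ∈ F, α ∈ ((x + ·) '' (H : Set (Fin d → ℤ)))
    · rw [Finset.filter_true_of_mem hF]
    · push Not at hF
      obtain ⟨α, hα, hαH⟩ := hF
      rw [hmem] at hαH
      obtain ⟨t, N, hN, ht, htH, htα⟩ := exists_sep H _ hαH
      have hss : F.filter (fun α => torusChar (α - x) t = 1) ⊂ F := by
        rw [Finset.filter_ssubset]; exact ⟨α, hα, htα⟩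
      have h1 := ih _ hss
      rw [Finset.filter_filter] at h1
      have h2 : F.filter (fun α => torusChar (α - x) t = 1 ∧ α ∈ ((x + ·) '' (H : Set (Fin d → ℤ))))
          = F.filter (· ∈ ((x + ·) '' (H : Set (Fin d → ℤ)))) := by
        apply Finset.filter_congr
        intro β _
        rw [hmem]
        exact ⟨fun h => h.2, fun h => ⟨htH _ h, h⟩⟩
      rw [h2] at h1
      exact h1.trans (step_avg p hp1 F a x t N hN ht)

lemma tc_integral {d : ℕ} (a : Fin d → ℤ) (ha : a ≠ 0) :
    ∫ x : Torus d, torusChar a x = 0 := by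
  obtain ⟨t, N, -, -, -, ht⟩ := exists_sep (⊥ : AddSubgroup (Fin d → ℤ)) a (by simpa using ha)
  have h := integral_add_right_eq_self (μ := (volume : Measure (Torus d))) (torusChar a) t
  simp_rw [tc_add_right] at h
  rw [integral_mul_const] at h
  have h2 : (∫ x : Torus d, torusChar a x) * (torusChar a t - 1) = 0 := by
    rw [mul_sub, h]; ring
  rcases mul_eq_zero.1 h2 with h3 | h3
  · exact h3
  · exact absurd (sub_eq_zero.1 h3) ht

lemma tc_integral_re {d : ℕ} (a : Fin d → ℤ) (ha : a ≠ 0) :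
    ∫ x : Torus d, (torusChar a x).re = 0 := by
  have hi : Integrable (torusChar a : Torus d → ℂ) volume :=
    (tc_cont a).integrable_of_hasCompactSupport (HasCompactSupport.of_compactSpace _)
  have := integral_re hi
  simp only [RCLike.re_eq_complex_re] at this
  rw [this, tc_integral a ha]; simp

lemma four_point {d : ℕ} {p : ℝ≥0∞} {Λ : Set (Fin d → ℤ)} (hc : IsContractiveLp d p Λ)
    {γ α β η : Fin d → ℤ} (hγ : γ ∈ Λ) (hα : α ∈ Λ) (hβ : β ∈ Λ) (hη : η ∉ Λ)
    (c₀ c₁ c₂ c₃ : ℂ) :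
    eLpNorm (fun x : Torus d => c₀ * torusChar γ x + c₁ * torusChar α x + c₂ * torusChar β x)
        p volume ≤
    eLpNorm (fun x : Torus d => c₀ * torusChar γ x + c₁ * torusChar α x + c₂ * torusChar β x
      + c₃ * torusChar η x) p volume := by
  have key := hc {γ, α, β, η}
    (Pi.single γ c₀ + Pi.single α c₁ + Pi.single β c₂ + Pi.single η c₃)
  have hs : ∀ (F : Finset (Fin d → ℤ)) (μ : Fin d → ℤ) (c : ℂ) (x : Torus d),
      ∑ ν ∈ F, (Pi.single μ c : (Fin d → ℤ) → ℂ) ν * torusChar ν x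
        = if μ ∈ F then c * torusChar μ x else 0 := by
    intro F μ c x
    simp [Pi.single_apply, ite_mul]
  convert key using 2
  · funext x
    simp only [trigPoly, Pi.add_apply, add_mul, Finset.sum_add_distrib, hs]
    simp [hγ, hα, hβ, hη]
  · funext x
    simp only [trigPoly, Pi.add_apply, add_mul, Finset.sum_add_distrib, hs]
    simp

lemma four_point' {d : ℕ} {p : ℝ≥0∞} {Λ : Set (Fin d → ℤ)} (hc : IsContractiveLp d p Λ)
    {γ α β : Fin d → ℤ} (hγ : γ ∈ Λ) (hα : α ∈ Λ) (hβ : β ∈ Λ) (hη : α + β - γ ∉ Λ)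
    (c₀ c₁ c₂ c₃ : ℂ) :
    eLpNorm (fun x : Torus d => c₀ + c₁ * torusChar (α - γ) x + c₂ * torusChar (β - γ) x)
        p volume ≤
    eLpNorm (fun x : Torus d => c₀ + c₁ * torusChar (α - γ) x + c₂ * torusChar (β - γ) x
      + c₃ * (torusChar (α - γ) x * torusChar (β - γ) x)) p volume := by
  have key := four_point hc hγ hα hβ hη c₀ c₁ c₂ c₃
  have e1 : ∀ x : Torus d, torusChar α x = torusChar γ x * torusChar (α - γ) x := by
    intro x; rw [← tc_add_left]; congr 1; abel
  have e2 : ∀ x : Torus d, torusChar β x = torusChar γ x * torusChar (β - γ) x := by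
    intro x; rw [← tc_add_left]; congr 1; abel
  have e3 : ∀ x : Torus d, torusChar (α + β - γ) x
      = torusChar γ x * (torusChar (α - γ) x * torusChar (β - γ) x) := by
    intro x; rw [← tc_add_left, ← tc_add_left]; congr 1; abel
  refine le_trans (le_of_eq ?_) (key.trans (le_of_eq ?_))
  · apply eLpNorm_congr_norm_ae
    filter_upwards with x
    rw [e1, e2, show c₀ * torusChar γ x + c₁ * (torusChar γ x * torusChar (α - γ) x)
      + c₂ * (torusChar γ x * torusChar (β - γ) x) = torusChar γ x *
      (c₀ + c₁ * torusChar (α - γ) x + c₂ * torusChar (β - γ) x) by ring, norm_mul, tc_norm, one_mul]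
  · apply eLpNorm_congr_norm_ae
    filter_upwards with x
    rw [e1, e2, e3, show c₀ * torusChar γ x + c₁ * (torusChar γ x * torusChar (α - γ) x)
      + c₂ * (torusChar γ x * torusChar (β - γ) x)
      + c₃ * (torusChar γ x * (torusChar (α - γ) x * torusChar (β - γ) x)) = torusChar γ x *
      (c₀ + c₁ * torusChar (α - γ) x + c₂ * torusChar (β - γ) x
        + c₃ * (torusChar (α - γ) x * torusChar (β - γ) x)) by ring, norm_mul, tc_norm, one_mul]

/-- The case `p = ∞`. -/
lemma case_top {d : ℕ} (a b : Fin d → ℤ)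
    (h : ∀ c₀ c₁ c₂ c₃ : ℂ,
      eLpNorm (fun x : Torus d => c₀ + c₁ * torusChar a x + c₂ * torusChar b x) ∞ volume ≤
      eLpNorm (fun x : Torus d => c₀ + c₁ * torusChar a x + c₂ * torusChar b x
        + c₃ * (torusChar a x * torusChar b x)) ∞ volume) : False := by
  have h1 := h 1 1 1 (-1)
  simp only [one_mul] at h1
  have hcont : Continuous (fun x : Torus d => 1 + torusChar a x + torusChar b x) :=
    (continuous_const.add (tc_cont a)).add (tc_cont b)
  have hub : eLpNorm (fun x : Torus d => 1 + torusChar a x + torusChar b x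
        + (-1) * (torusChar a x * torusChar b x)) ∞ volume ≤ ENNReal.ofReal (29/10) := by
    rw [eLpNorm_exponent_top]
    apply eLpNormEssSup_le_of_ae_bound
    filter_upwards with x
    have hz := tc_norm a x
    have hw := tc_norm b x
    generalize torusChar a x = z at *
    generalize torusChar b x = w at *
    have e : 1 + z + w + (-1) * (z * w) = (1 + z) + w * (1 - z) := by ring
    rw [e]
    have h2 : ‖(1 + z) + w * (1 - z)‖ ≤ ‖1 + z‖ + ‖1 - z‖ := by
      refine (norm_add_le _ _).trans ?_
      rw [norm_mul, hw, one_mul]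
    have h3 : ‖1 + z‖ ^ 2 + ‖1 - z‖ ^ 2 = 4 := by
      have := parallelogram_law_with_norm ℝ (1:ℂ) z
      simp only [hz, norm_one] at this
      nlinarith
    nlinarith [sq_nonneg (‖1 + z‖ - ‖1 - z‖), norm_nonneg (1 + z), norm_nonneg (1 - z)]
  have h4 := h1.trans hub
  rw [eLpNorm_exponent_top] at h4
  have h5 : ∀ᵐ x : Torus d, ‖(1 + torusChar a x + torusChar b x : ℂ)‖ ≤ 29/10 := by
    filter_upwards [ae_le_eLpNormEssSup (f := fun x : Torus d => 1 + torusChar a x + torusChar b x)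
      (μ := volume)] with x hx
    have := hx.trans h4
    rw [← ofReal_norm] at this
    exact (ENNReal.ofReal_le_ofReal_iff (by norm_num)).1 this
  have h6 : ∀ x : Torus d, ‖(1 + torusChar a x + torusChar b x : ℂ)‖ ≤ 29/10 := by
    have hcl : IsClosed {x : Torus d | ‖(1 + torusChar a x + torusChar b x : ℂ)‖ ≤ 29/10} :=
      isClosed_le hcont.norm continuous_const
    have hd := Measure.dense_of_ae h5
    intro x
    have := hd.closure_eq
    rw [hcl.closure_eq] at this
    exact (Set.eq_univ_iff_forall.1 this) x
  have h7 := h6 0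
  simp only [tc_zero_right] at h7
  norm_num at h7

lemma taylor_real (q : ℝ) : ∃ C ρ : ℝ, 0 ≤ C ∧ 0 < ρ ∧ ∀ τ : ℝ, |τ| ≤ ρ →
    |(1 + τ) ^ q - (1 + q * τ + q * (q - 1) / 2 * τ ^ 2)| ≤ C * |τ| ^ 3 := by
  have h := (Real.one_add_rpow_hasFPowerSeriesAt_zero (a := q)).isBigO_sub_partialSum_pow 3
  obtain ⟨C, hC, hb⟩ := h.exists_nonneg
  have hb := hb.bound
  obtain ⟨ρ, hρ, hball⟩ := Metric.eventually_nhds_iff.1 hb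
  refine ⟨C, ρ / 2, hC, by positivity, ?_⟩
  intro τ hτ
  have := hball (y := τ) (by rw [dist_zero_right, Real.norm_eq_abs]; linarith)
  have hch : Ring.choose q 2 = q * (q - 1) / 2 := by
    have := Ring.descPochhammer_eq_factorial_smul_choose q 2
    simp [descPochhammer_succ_right, Nat.factorial, Polynomial.smeval_mul, Polynomial.smeval_sub,
      Polynomial.smeval_X, Polynomial.smeval_one] at this
    linarith
  simpa [FormalMultilinearSeries.partialSum, Finset.sum_range_succ, binomialSeries, hch,
    mul_comm] using this

lemma taylor_norm (P : ℝ) : ∃ C ρ : ℝ, 0 ≤ C ∧ 0 < ρ ∧ ∀ y : ℂ, ‖y‖ ≤ ρ →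
    |‖1 + y‖ ^ P - (1 + P * y.re + P / 2 * ‖y‖ ^ 2 + 2 * (P / 2) * (P / 2 - 1) * y.re ^ 2)|
      ≤ C * ‖y‖ ^ 3 := by
  obtain ⟨C, ρ, hC, hρ, h⟩ := taylor_real (P / 2)
  set q := P / 2 with hq
  refine ⟨C * 27 + |q * (q - 1) / 2| * 5, min 1 (ρ / 3), by positivity, by positivity, ?_⟩
  intro y hy
  have hy1 : ‖y‖ ≤ 1 := hy.trans (min_le_left _ _)
  have hy2 : ‖y‖ ≤ ρ / 3 := hy.trans (min_le_right _ _)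
  have hn := norm_nonneg y
  have hre := Complex.abs_re_le_norm y
  set n := ‖y‖ with hndef
  set r := y.re with hr
  have hτ : |2 * r + n ^ 2| ≤ 3 * n := by
    refine (abs_add_le _ _).trans ?_
    rw [abs_mul, abs_of_nonneg (sq_nonneg n), abs_two]; nlinarith
  have h1 := h (2 * r + n ^ 2) (by linarith)
  have hsq : ‖1 + y‖ ^ 2 = 1 + (2 * r + n ^ 2) := by
    rw [hndef, hr, Complex.sq_norm, Complex.sq_norm, Complex.normSq_apply, Complex.normSq_apply]
    simp; ring
  have hpow : ‖1 + y‖ ^ P = (1 + (2 * r + n ^ 2)) ^ q := by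
    rw [← hsq, ← Real.rpow_natCast, ← Real.rpow_mul (norm_nonneg _)]
    congr 1; rw [hq]; push_cast; ring
  rw [hpow]
  have h2 : |2 * r + n ^ 2| ^ 3 ≤ 27 * n ^ 3 := by
    calc _ ≤ (3 * n) ^ 3 := by gcongr
      _ = _ := by ring
  have h3 : |q * (q - 1) / 2 * (4 * r * n ^ 2 + n ^ 4)| ≤ |q * (q - 1) / 2| * 5 * n ^ 3 := by
    rw [abs_mul, mul_assoc |q * (q - 1) / 2| 5 (n ^ 3)]
    refine mul_le_mul_of_nonneg_left ?_ (abs_nonneg _)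
    refine (abs_add_le _ _).trans ?_
    rw [abs_mul, abs_mul, abs_of_nonneg (by positivity : 0 ≤ n ^ 2),
      abs_of_nonneg (by positivity : 0 ≤ n ^ 4), abs_of_pos (by norm_num : (0:ℝ) < 4)]
    have : n ^ 4 ≤ n ^ 3 := pow_le_pow_of_le_one hn hy1 (by norm_num)
    have : |r| * n ^ 2 ≤ n * n ^ 2 := by gcongr
    nlinarith
  have e : (1 + (2 * r + n ^ 2)) ^ q - (1 + P * r + q * n ^ 2 + 2 * q * (q - 1) * r ^ 2)
      = ((1 + (2 * r + n ^ 2)) ^ q - (1 + q * (2 * r + n ^ 2)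
          + q * (q - 1) / 2 * (2 * r + n ^ 2) ^ 2))
        + q * (q - 1) / 2 * (4 * r * n ^ 2 + n ^ 4) := by
    have : P = 2 * q := by rw [hq]; ring
    rw [this]; ring
  rw [e]
  refine (abs_add_le _ _).trans ?_
  have : C * |2 * r + n ^ 2| ^ 3 ≤ C * (27 * n ^ 3) := by gcongr
  linarith

/-- a primitive cube root of unity -/
def om : ℂ := ⟨-1/2, √3/2⟩
/-- the conjugate primitive cube root of unity -/
def om' : ℂ := ⟨-1/2, -(√3/2)⟩

lemma norm_om : ‖om‖ = 1 := by
  have h : (√3)^2 = 3 := Real.sq_sqrt (by norm_num)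
  have : ‖om‖ ^ 2 = 1 := by
    rw [Complex.sq_norm, Complex.normSq_apply]; simp only [om]; nlinarith
  nlinarith [norm_nonneg om]

lemma norm_om' : ‖om'‖ = 1 := by
  have h : (√3)^2 = 3 := Real.sq_sqrt (by norm_num)
  have : ‖om'‖ ^ 2 = 1 := by
    rw [Complex.sq_norm, Complex.normSq_apply]; simp only [om']; nlinarith
  nlinarith [norm_nonneg om']

lemma cube_sum (P : ℝ) : ∃ C ρ : ℝ, 0 ≤ C ∧ 0 < ρ ∧ ∀ y : ℂ, ‖y‖ ≤ ρ →
    |(‖1 + y‖ ^ P + ‖1 + om * y‖ ^ P + ‖1 + om' * y‖ ^ P) - (3 + 3 * (P / 2) ^ 2 * ‖y‖ ^ 2)|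
      ≤ C * ‖y‖ ^ 3 := by
  obtain ⟨C, ρ, hC, hρ, h⟩ := taylor_norm P
  refine ⟨3 * C, ρ, by positivity, hρ, ?_⟩
  intro y hy
  have n1 : ‖om * y‖ = ‖y‖ := by rw [norm_mul, norm_om, one_mul]
  have n2 : ‖om' * y‖ = ‖y‖ := by rw [norm_mul, norm_om', one_mul]
  have h0 := h y hy
  have h1 := h (om * y) (by rw [n1]; exact hy)
  have h2 := h (om' * y) (by rw [n2]; exact hy)
  rw [n1] at h1
  rw [n2] at h2
  have r1 : (om * y).re = -1/2 * y.re - √3/2 * y.im := by simp [om, Complex.mul_re]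
  have r2 : (om' * y).re = -1/2 * y.re + √3/2 * y.im := by simp [om', Complex.mul_re]
  have hs : (√3)^2 = 3 := Real.sq_sqrt (by norm_num)
  have hy2 : ‖y‖ ^ 2 = y.re ^ 2 + y.im ^ 2 := by
    rw [Complex.sq_norm, Complex.normSq_apply]; ring
  have hsum1 : y.re + (om * y).re + (om' * y).re = 0 := by rw [r1, r2]; ring
  have hsum2 : y.re ^ 2 + (om * y).re ^ 2 + (om' * y).re ^ 2 = 3 / 2 * ‖y‖ ^ 2 := by
    rw [r1, r2, hy2]; linear_combination (y.im ^ 2 / 2) * hs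
  have e : (‖1 + y‖ ^ P + ‖1 + om * y‖ ^ P + ‖1 + om' * y‖ ^ P)
      - (3 + 3 * (P / 2) ^ 2 * ‖y‖ ^ 2)
      = (‖1 + y‖ ^ P - (1 + P * y.re + P / 2 * ‖y‖ ^ 2 + 2 * (P / 2) * (P / 2 - 1) * y.re ^ 2))
      + (‖1 + om * y‖ ^ P - (1 + P * (om * y).re + P / 2 * ‖y‖ ^ 2
          + 2 * (P / 2) * (P / 2 - 1) * (om * y).re ^ 2))
      + (‖1 + om' * y‖ ^ P - (1 + P * (om' * y).re + P / 2 * ‖y‖ ^ 2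
          + 2 * (P / 2) * (P / 2 - 1) * (om' * y).re ^ 2)) := by
    linear_combination P * hsum1 + 2 * (P / 2) * (P / 2 - 1) * hsum2
  rw [e]
  refine (abs_add_le _ _).trans ?_
  have := abs_add_le (‖1 + y‖ ^ P - (1 + P * y.re + P / 2 * ‖y‖ ^ 2
      + 2 * (P / 2) * (P / 2 - 1) * y.re ^ 2))
      (‖1 + om * y‖ ^ P - (1 + P * (om * y).re + P / 2 * ‖y‖ ^ 2
          + 2 * (P / 2) * (P / 2 - 1) * (om * y).re ^ 2))
  linarith

lemma pointwise (P : ℝ) (hP : 0 ≤ P) : ∃ C ρ : ℝ, 0 ≤ C ∧ 0 < ρ ∧ ∀ (ε : ℝ) (A B : ℂ), 0 < ε →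
    ε ≤ ρ → 1 / 2 ≤ ‖A‖ → ‖A‖ ≤ 3 / 2 → ‖B‖ ≤ 2 →
    |(‖A + ε * B‖ ^ P + ‖A + ε * om * B‖ ^ P + ‖A + ε * om' * B‖ ^ P)
      - (3 * ‖A‖ ^ P + 3 * (P / 2) ^ 2 * ε ^ 2 * (‖A‖ ^ (P - 2) * ‖B‖ ^ 2))| ≤ C * ε ^ 3 := by
  obtain ⟨C, ρ, hC, hρ, h⟩ := cube_sum P
  refine ⟨C * (3 / 2) ^ P * 64, ρ / 4, by positivity, by positivity, ?_⟩
  intro ε A B hε hερ hA hA2 hB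
  have hA0 : 0 < ‖A‖ := by linarith
  have hAne : A ≠ 0 := norm_pos_iff.1 hA0
  set y : ℂ := ε * B / A with hy
  have hny : ‖y‖ = ε * ‖B‖ / ‖A‖ := by
    rw [hy, norm_div, norm_mul, Complex.norm_real, Real.norm_eq_abs, abs_of_pos hε]
  have hy4 : ‖y‖ ≤ 4 * ε := by
    rw [hny, div_le_iff₀ hA0]; nlinarith [norm_nonneg B]
  have h1 := h y (by linarith)
  have f : ∀ w : ℂ, ‖A + ε * w * B‖ ^ P = ‖A‖ ^ P * ‖1 + w * y‖ ^ P := by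
    intro w
    rw [← Real.mul_rpow (norm_nonneg _) (norm_nonneg _), ← norm_mul]
    congr 2; rw [hy]; field_simp
  have f1 : ‖A + ε * B‖ ^ P = ‖A‖ ^ P * ‖1 + y‖ ^ P := by simpa using f 1
  have hpw : ‖A‖ ^ (P - 2) * ‖B‖ ^ 2 * ε ^ 2 = ‖A‖ ^ P * ‖y‖ ^ 2 := by
    rw [hny, Real.rpow_sub hA0, Real.rpow_two]; field_simp
  rw [f, f, f1]
  have e : ‖A‖ ^ P * ‖1 + y‖ ^ P + ‖A‖ ^ P * ‖1 + om * y‖ ^ P + ‖A‖ ^ P * ‖1 + om' * y‖ ^ P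
      - (3 * ‖A‖ ^ P + 3 * (P / 2) ^ 2 * ε ^ 2 * (‖A‖ ^ (P - 2) * ‖B‖ ^ 2))
      = ‖A‖ ^ P * ((‖1 + y‖ ^ P + ‖1 + om * y‖ ^ P + ‖1 + om' * y‖ ^ P)
        - (3 + 3 * (P / 2) ^ 2 * ‖y‖ ^ 2)) := by
    linear_combination (-3 * (P / 2) ^ 2) * hpw
  rw [e, abs_mul, abs_of_nonneg (by positivity)]
  calc ‖A‖ ^ P * _ ≤ (3 / 2) ^ P * (C * (4 * ε) ^ 3) := by
        refine mul_le_mul (Real.rpow_le_rpow hA0.le hA2 hP) (h1.trans ?_) (abs_nonneg _)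
          (by positivity)
        gcongr
    _ = _ := by ring

lemma nonneg_of_small {X C ρ : ℝ} (hρ : 0 < ρ) (h : ∀ ε, 0 < ε → ε ≤ ρ → 0 ≤ X + C * ε) :
    0 ≤ X := by
  by_contra hX
  push Not at hX
  have hC : 0 < |C| + 1 := by positivity
  have := h (min ρ (-X / (2 * (|C| + 1)))) (lt_min hρ (by apply div_pos <;> linarith))
    (min_le_left _ _)
  have h2 : min ρ (-X / (2 * (|C| + 1))) ≤ -X / (2 * (|C| + 1)) := min_le_right _ _
  have h0 : 0 < min ρ (-X / (2 * (|C| + 1))) := lt_min hρ (by apply div_pos <;> linarith)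
  generalize min ρ (-X / (2 * (|C| + 1))) = m at *
  rw [le_div_iff₀ (by positivity)] at h2
  nlinarith [le_abs_self C]

lemma int_cont {d : ℕ} {f : Torus d → ℝ} (hf : Continuous f) : Integrable f volume :=
  hf.integrable_of_hasCompactSupport (HasCompactSupport.of_compactSpace _)

lemma vol_univ {d : ℕ} : (volume : Measure (Torus d)).real Set.univ = 1 := by
  have : (volume : Measure (Torus d)) Set.univ = 1 := by
    rw [← Set.pi_univ Set.univ, volume_pi_pi]
    simp [AddCircle.measure_univ]
  simp [Measure.real, this]

lemma case_finite {d : ℕ} (P : ℝ) (hP : 0 < P) (hP2 : P ≠ 2) (a b : Fin d → ℤ) (ha : a ≠ 0)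
    (h : ∀ c₀ c₁ c₂ c₃ : ℂ,
      ∫ x : Torus d, ‖c₀ + c₁ * torusChar a x + c₂ * torusChar b x‖ ^ P ≤
      ∫ x : Torus d, ‖c₀ + c₁ * torusChar a x + c₂ * torusChar b x
        + c₃ * (torusChar a x * torusChar b x)‖ ^ P) : False := by
  have ca := tc_cont a
  have cb := tc_cont b
  let A : Torus d → ℂ := fun x => 1 + (1/2 : ℂ) * torusChar a x
  have cA : Continuous A := by fun_prop
  have hA1 : ∀ x, 1 / 2 ≤ ‖A x‖ := by
    intro x
    have h1 : ‖(1:ℂ)‖ ≤ ‖A x‖ + ‖(1/2 : ℂ) * torusChar a x‖ := by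
      have := norm_sub_le (A x) ((1/2 : ℂ) * torusChar a x)
      simpa [A] using this
    rw [norm_mul, tc_norm] at h1
    norm_num at h1
    linarith
  have hA2 : ∀ x, ‖A x‖ ≤ 3 / 2 := by
    intro x
    have h1 := norm_add_le (1:ℂ) ((1/2 : ℂ) * torusChar a x)
    rw [norm_mul, tc_norm] at h1
    norm_num at h1
    simpa [A] using h1.trans (by norm_num)
  have hA0 : ∀ x, ‖A x‖ ≠ 0 := fun x => by linarith [hA1 x]
  have cAP : Continuous (fun x => ‖A x‖ ^ (P - 2)) :=
    cA.norm.rpow_const fun x => Or.inl (hA0 x)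
  have cre : Continuous (fun x : Torus d => (torusChar a x).re) := Complex.continuous_re.comp ca
  set I := ∫ x : Torus d, ‖A x‖ ^ (P - 2) * (torusChar a x).re with hI
  set J := ∫ x : Torus d, ‖A x‖ ^ (P - 2) with hJ
  obtain ⟨C, ρ, hC, hρ, hpt⟩ := pointwise P hP.le
  have main : ∀ δ : ℝ, |δ| ≤ 1 → 0 ≤ 2 * δ * I + δ ^ 2 * J := by
    intro δ hδ
    let S : ℝ → ℂ → Torus d → ℝ := fun ε w x => ‖A x + ε * w * torusChar b x‖ ^ P
    let T : ℝ → ℂ → Torus d → ℝ := fun ε w x =>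
      ‖A x + ε * w * (torusChar b x * (1 + δ * torusChar a x))‖ ^ P
    have cS : ∀ ε w, Continuous (S ε w) := fun ε w =>
      Continuous.rpow_const (by fun_prop) fun x => Or.inr hP.le
    have cT : ∀ ε w, Continuous (T ε w) := fun ε w =>
      Continuous.rpow_const (by fun_prop) fun x => Or.inr hP.le
    have hST : ∀ ε w, ∫ x, S ε w x ≤ ∫ x, T ε w x := by
      intro ε w
      have := h 1 (1/2) (ε * w) (ε * w * δ)
      refine this.trans (le_of_eq ?_)
      congr 1; funext x; simp only [T, A]; congr 2; ring
    have hBn : ∀ x : Torus d, ‖torusChar b x * (1 + δ * torusChar a x)‖ ^ 2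
        = 1 + (2 * δ * (torusChar a x).re + δ ^ 2) := by
      intro x
      have h1 : (torusChar a x).re ^ 2 + (torusChar a x).im ^ 2 = 1 := by
        have := Complex.sq_norm (torusChar a x)
        rw [tc_norm, Complex.normSq_apply] at this; linarith
      rw [norm_mul, tc_norm, one_mul, Complex.sq_norm, Complex.normSq_apply]
      simp
      linear_combination δ ^ 2 * h1
    have hB2 : ∀ x : Torus d, ‖torusChar b x * (1 + δ * torusChar a x)‖ ≤ 2 := by
      intro x
      rw [norm_mul, tc_norm, one_mul]
      refine (norm_add_le _ _).trans ?_
      rw [norm_mul, tc_norm, Complex.norm_real, Real.norm_eq_abs, norm_one]; linarith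
    have hK : 0 < 3 * (P / 2) ^ 2 := by positivity
    have step : ∀ ε, 0 < ε → ε ≤ ρ →
        0 ≤ 3 * (P / 2) ^ 2 * (2 * δ * I + δ ^ 2 * J) + 2 * C * ε := by
      intro ε hε hερ
      have hle : ∀ x : Torus d, (T ε 1 x + T ε om x + T ε om' x) - (S ε 1 x + S ε om x + S ε om' x)
          ≤ 3 * (P / 2) ^ 2 * ε ^ 2 * (2 * δ * (‖A x‖ ^ (P - 2) * (torusChar a x).re)
            + δ ^ 2 * ‖A x‖ ^ (P - 2)) + 2 * C * ε ^ 3 := by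
        intro x
        have e1 := abs_le.1 (hpt ε (A x) (torusChar b x) hε hερ (hA1 x) (hA2 x)
          (by rw [tc_norm]; norm_num))
        have e2 := abs_le.1 (hpt ε (A x) (torusChar b x * (1 + δ * torusChar a x)) hε hερ
          (hA1 x) (hA2 x) (hB2 x))
        rw [hBn] at e2
        rw [tc_norm] at e1
        simp only [S, T, mul_one]
        nlinarith [e1.1, e1.2, e2.1, e2.2]
      have i1 : Integrable (fun x : Torus d => 2 * δ * (‖A x‖ ^ (P - 2) * (torusChar a x).re))
          volume := int_cont (continuous_const.mul (cAP.mul cre))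
      have i2 : Integrable (fun x : Torus d => δ ^ 2 * ‖A x‖ ^ (P - 2)) volume :=
        int_cont (continuous_const.mul cAP)
      have hint := integral_mono
        (int_cont ((((cT ε 1).add (cT ε om)).add (cT ε om')).sub
          (((cS ε 1).add (cS ε om)).add (cS ε om'))))
        (((i1.add i2).const_mul (3 * (P / 2) ^ 2 * ε ^ 2)).add (integrable_const (2 * C * ε ^ 3)))
        hle
      have iS := fun w => int_cont (cS ε w)
      have iT := fun w => int_cont (cT ε w)
      have el : ∫ x, ((T ε 1 x + T ε om x + T ε om' x) - (S ε 1 x + S ε om x + S ε om' x))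
          = ((∫ x, T ε 1 x) + (∫ x, T ε om x) + ∫ x, T ε om' x)
            - ((∫ x, S ε 1 x) + (∫ x, S ε om x) + ∫ x, S ε om' x) := by
        have jT : Integrable (fun x => T ε 1 x + T ε om x) volume := (iT 1).add (iT om)
        have jS : Integrable (fun x => S ε 1 x + S ε om x) volume := (iS 1).add (iS om)
        have kT : Integrable (fun x => T ε 1 x + T ε om x + T ε om' x) volume := jT.add (iT om')
        have kS : Integrable (fun x => S ε 1 x + S ε om x + S ε om' x) volume := jS.add (iS om')
        rw [integral_sub kT kS, integral_add jT (iT om'), integral_add (iT 1) (iT om),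
          integral_add jS (iS om'), integral_add (iS 1) (iS om)]
      have er : ∫ x, (3 * (P / 2) ^ 2 * ε ^ 2 * (2 * δ * (‖A x‖ ^ (P - 2) * (torusChar a x).re)
            + δ ^ 2 * ‖A x‖ ^ (P - 2)) + 2 * C * ε ^ 3)
          = 3 * (P / 2) ^ 2 * ε ^ 2 * (2 * δ * I + δ ^ 2 * J) + 2 * C * ε ^ 3 := by
        have i3 : Integrable (fun x => 3 * (P / 2) ^ 2 * ε ^ 2 *
            (2 * δ * (‖A x‖ ^ (P - 2) * (torusChar a x).re) + δ ^ 2 * ‖A x‖ ^ (P - 2))) volume :=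
          (i1.add i2).const_mul _
        rw [integral_add i3 (integrable_const _), integral_const_mul,
          integral_add i1 i2, integral_const_mul, integral_const_mul]
        simp [hI, hJ, vol_univ]
      have h3 := hST ε 1
      have h4 := hST ε om
      have h5 := hST ε om'
      have h6 : 0 ≤ ε ^ 2 * (3 * (P / 2) ^ 2 * (2 * δ * I + δ ^ 2 * J) + 2 * C * ε) := by
        have hint' := el.symm.le.trans (hint.trans er.le)
        nlinarith [hint']
      exact nonneg_of_mul_nonneg_right h6 (by positivity)
    have := nonneg_of_small hρ step
    exact nonneg_of_mul_nonneg_right this hK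
  have hIz : I = 0 := by
    apply le_antisymm
    · have : 0 ≤ -(2 * I) := by
        refine nonneg_of_small (C := J) one_pos fun ε hε hε1 => ?_
        have := main (-ε) (by rw [abs_neg, abs_of_pos hε]; exact hε1)
        have h6 : 0 ≤ ε * (-(2 * I) + J * ε) := by nlinarith
        exact nonneg_of_mul_nonneg_right h6 hε
      linarith
    · have : 0 ≤ 2 * I := by
        refine nonneg_of_small (C := J) one_pos fun ε hε hε1 => ?_
        have := main ε (by rw [abs_of_pos hε]; exact hε1)
        have h6 : 0 ≤ ε * (2 * I + J * ε) := by nlinarith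
        exact nonneg_of_mul_nonneg_right h6 hε
      linarith
  -- Chebyshev-type argument
  set s := (P - 2) / 2 with hs
  have hs0 : s ≠ 0 := by
    intro h0; apply hP2; rw [hs] at h0; linarith
  have hAs : ∀ x, ‖A x‖ ^ (P - 2) = (5 / 4 + (torusChar a x).re) ^ s := by
    intro x
    have h1 : (torusChar a x).re ^ 2 + (torusChar a x).im ^ 2 = 1 := by
      have := Complex.sq_norm (torusChar a x)
      rw [tc_norm, Complex.normSq_apply] at this; linarith
    have h2 : ‖A x‖ ^ 2 = 5 / 4 + (torusChar a x).re := by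
      rw [Complex.sq_norm, Complex.normSq_apply]
      simp [A]
      linear_combination (1 / 4) * h1
    rw [← h2, ← Real.rpow_natCast, ← Real.rpow_mul (norm_nonneg _)]
    congr 1; rw [hs]; push_cast; ring
  let G : Torus d → ℝ := fun x => (‖A x‖ ^ (P - 2) - (5 / 4) ^ s) * (torusChar a x).re
  have cG : Continuous G := (cAP.sub continuous_const).mul cre
  have hG : ∫ x, G x = 0 := by
    have : ∀ x, G x = ‖A x‖ ^ (P - 2) * (torusChar a x).re - (5 / 4) ^ s * (torusChar a x).re :=
      fun x => sub_mul _ _ _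
    simp_rw [this]
    have i1 : Integrable (fun x => ‖A x‖ ^ (P - 2) * (torusChar a x).re) volume :=
      int_cont (cAP.mul cre)
    have i2 : Integrable (fun x : Torus d => (5 / 4 : ℝ) ^ s * (torusChar a x).re) volume :=
      int_cont (continuous_const.mul cre)
    rw [integral_sub i1 i2,
      integral_const_mul, tc_integral_re a ha, ← hI, hIz]; simp
  have hre : ∀ x, -1 ≤ (torusChar a x).re := by
    intro x
    have := Complex.abs_re_le_norm (torusChar a x)
    rw [tc_norm] at this; exact (abs_le.1 this).1
  have hG0 : G 0 ≠ 0 := by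
    simp only [G, hAs, tc_zero_right, Complex.one_re, mul_one]
    intro h0
    have h1 : (5 / 4 + 1 : ℝ) ^ s = (5 / 4) ^ s := by linarith
    have := (Real.rpow_left_inj (by norm_num) (by norm_num) hs0).1 h1
    norm_num at this
  rcases lt_or_gt_of_ne hs0 with hneg | hpos
  · have hGn : 0 ≤ fun x => - G x := by
      intro x
      simp only [G, hAs, Pi.zero_apply]
      have hx := hre x
      rcases le_total 0 (torusChar a x).re with hr | hr
      · have := Real.rpow_le_rpow_of_nonpos (by norm_num : (0:ℝ) < 5 / 4)
          (by linarith : (5/4:ℝ) ≤ 5 / 4 + (torusChar a x).re) hneg.le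
        nlinarith
      · have := Real.rpow_le_rpow_of_nonpos (by linarith : (0:ℝ) < 5 / 4 + (torusChar a x).re)
          (by linarith) hneg.le (y := 5/4)
        nlinarith
    have := cG.neg.integral_pos_of_hasCompactSupport_nonneg_nonzero (μ := volume)
      (HasCompactSupport.of_compactSpace _) hGn (x := 0) (by simpa using hG0)
    rw [integral_neg', hG] at this
    simp at this
  · have hGn : 0 ≤ G := by
      intro x
      simp only [G, hAs, Pi.zero_apply]
      have hx := hre x
      rcases le_total 0 (torusChar a x).re with hr | hr
      · have := Real.rpow_le_rpow (by norm_num : (0:ℝ) ≤ 5 / 4)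
          (by linarith : (5/4:ℝ) ≤ 5 / 4 + (torusChar a x).re) hpos.le
        nlinarith
      · have := Real.rpow_le_rpow (by linarith : (0:ℝ) ≤ 5 / 4 + (torusChar a x).re)
          (by linarith) hpos.le (y := 5/4)
        nlinarith
    have := cG.integral_pos_of_hasCompactSupport_nonneg_nonzero (μ := volume)
      (HasCompactSupport.of_compactSpace _) hGn (x := 0) hG0
    rw [hG] at this
    exact lt_irrefl _ this

lemma eLp_to_int {d : ℕ} {p : ℝ≥0∞} (hp1 : 1 ≤ p) (hpt : p ≠ ∞) {f g : Torus d → ℂ}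
    (hf : Continuous f) (hg : Continuous g) (h : eLpNorm f p volume ≤ eLpNorm g p volume) :
    ∫ x, ‖f x‖ ^ p.toReal ≤ ∫ x, ‖g x‖ ^ p.toReal := by
  have hp0 : p ≠ 0 := (zero_lt_one.trans_le hp1).ne'
  have hP : 0 < p.toReal := ENNReal.toReal_pos hp0 hpt
  have mf : MemLp f p volume := hf.memLp_of_hasCompactSupport (HasCompactSupport.of_compactSpace _)
  have mg : MemLp g p volume := hg.memLp_of_hasCompactSupport (HasCompactSupport.of_compactSpace _)
  rw [mf.eLpNorm_eq_integral_rpow_norm hp0 hpt, mg.eLpNorm_eq_integral_rpow_norm hp0 hpt] at h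
  have nf : 0 ≤ ∫ x, ‖f x‖ ^ p.toReal := integral_nonneg fun x => by positivity
  have ng : 0 ≤ ∫ x, ‖g x‖ ^ p.toReal := integral_nonneg fun x => by positivity
  rw [ENNReal.ofReal_le_ofReal_iff (by positivity)] at h
  exact (Real.rpow_le_rpow_iff nf ng (by positivity)).1 h

lemma closed_of_contractive {d : ℕ} {p : ℝ≥0∞} (hp1 : 1 ≤ p) (hp2 : p ≠ 2)
    {Λ : Set (Fin d → ℤ)} (hc : IsContractiveLp d p Λ)
    {γ α β : Fin d → ℤ} (hγ : γ ∈ Λ) (hα : α ∈ Λ) (hβ : β ∈ Λ) : α + β - γ ∈ Λ := by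
  by_contra hη
  have key := four_point' hc hγ hα hβ hη
  by_cases hpt : p = ∞
  · subst hpt
    exact case_top _ _ key
  · have hne : α - γ ≠ 0 := by
      intro h0
      apply hη
      rw [sub_eq_zero.1 h0]; simpa using hβ
    have hp0 : p ≠ 0 := (zero_lt_one.trans_le hp1).ne'
    have ca := tc_cont (α - γ)
    have cb := tc_cont (β - γ)
    refine case_finite p.toReal (ENNReal.toReal_pos hp0 hpt) ?_ (α - γ) (β - γ) hne
      fun c₀ c₁ c₂ c₃ => eLp_to_int hp1 hpt (by fun_prop) (by fun_prop) (key c₀ c₁ c₂ c₃)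
    intro h2
    apply hp2
    rw [← ENNReal.ofReal_toReal hpt, h2]; simp

/-- Theorem 1: for `1 ≤ p ≤ ∞`, `p ≠ 2`, a nonempty `Λ ⊆ ℤ^d` is a contractive
projection set for `L^p(𝕋^d)` iff `Λ` is a coset in `ℤ^d`. -/
theorem contractive_projection_sets_Lp (d : ℕ) (hd : 1 ≤ d) (p : ℝ≥0∞)
    (hp1 : 1 ≤ p) (hp2 : p ≠ 2) (Λ : Set (Fin d → ℤ)) (hΛ : Λ.Nonempty) :
    IsContractiveLp d p Λ ↔ IsCoset Λ := by
  constructor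
  · intro hc
    obtain ⟨x, hx⟩ := hΛ
    refine ⟨x, { carrier := {v | x + v ∈ Λ}, zero_mem' := ?_, add_mem' := ?_, neg_mem' := ?_ }, ?_⟩
    · intro u v hu hv
      have := closed_of_contractive hp1 hp2 hc hx hu hv
      have e : x + u + (x + v) - x = x + (u + v) := by abel
      rwa [e] at this
    · simpa using hx
    · intro u hu
      have := closed_of_contractive hp1 hp2 hc hu hx hx
      have e : x + x - (x + u) = x + -u := by abel
      rwa [e] at this
    · ext y
      constructor
      · intro hy
        exact ⟨y - x, by simpa using hy, by simp⟩
      · rintro ⟨v, hv, rfl⟩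
        exact hv
  · rintro ⟨x, H, rfl⟩
    exact contractive_of_coset p hp1 x H

end
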